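/- arXiv:1311.2320 — 2 statements merged into one kernel-verified Lean document; each statement's English description precedes it below -/
import Mathlib

section
/- Let f : (0,∞) → ℂ be measurable with ∫_0^∞ |f(t)|/(1+t) dt < ∞, and suppose f is Hölder continuous on a neighborhood of a point x ∈ (0,∞): there exist δ > 0 with [x−δ, x+δ] ⊂ (0,∞), μ > 0 and γ ∈ (0,1] such that |f(s) − f(u)| ≤ μ|s−u|^γ for all s, u ∈ [x−δ, x+δ]. Then the boundary limits C⁺f(x) = lim_{ε→0⁺} C f(x + iε) and C⁻f(x) = lim_{ε→0⁺} C f(x − iε) exist, the principal value H f(x) exists, and C⁺f(x) − C⁻f(x) = f(x) and C⁺f(x) + C⁻f(x) = −i·H f(x). -/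
/-!
The Cauchy kernel is singular at `x` only, and the Hölder condition makes the singularity
integrable once the value `f x` is removed locally. With `I = (x - δ, x + δ]`, write
`f = g + f x · 1_I`. Then `t ↦ g t / (t - x)` is integrable on `(0, ∞)`: it is `O(|t - x| ^ (γ - 1))`
on `I` (Hölder) and `O(‖f t‖ / (1 + t))` off `I`. Let `K` be its integral.

* Since `|t - x ∓ iε| ≥ |t - x|`, dominated convergence gives `∫ g t / (t - x ∓ iε) → K`, and
  likewise for the truncated integrals of `g t / (t - x)`.
* For the constant part, `∫_I dt / (t - x - iη) = 2 i arctan (δ / η)`, which tends to `± i π` as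
  `η → 0±`, while the symmetric truncations of `∫_I dt / (t - x)` vanish because `1 / s` is odd.

Hence `C⁺f(x) = (K + iπ f x) / (2πi)`, `C⁻f(x) = (K - iπ f x) / (2πi)` and `H f(x) = K / π`, from
which both identities are read off.
-/

open MeasureTheory Complex Set Filter

/-- The one-sided Cauchy transform `C f(z) = (1/(2πi)) ∫₀^∞ f(t)/(t-z) dt`. -/
noncomputable def cauchyT (f : ℝ → ℂ) (z : ℂ) : ℂ :=
  (2 * Real.pi * Complex.I)⁻¹ * ∫ t in Ioi (0:ℝ), f t / ((t : ℂ) - z)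

/-- The truncated Hilbert transform
`(1/π) (∫₀^{x-ε} + ∫_{x+ε}^∞) f(t)/(t-x) dt`; its limit as `ε → 0⁺`
is the principal-value Hilbert transform. -/
noncomputable def hilbT (f : ℝ → ℂ) (x ε : ℝ) : ℂ :=
  (Real.pi : ℂ)⁻¹ *
    ((∫ t in Ioo (0:ℝ) (x - ε), f t / ((t : ℂ) - (x : ℂ))) +
      ∫ t in Ioi (x + ε), f t / ((t : ℂ) - (x : ℂ)))

/-! ### Local subtraction of `f x` -/

/-- The function `f` with its value at `x` subtracted on the window `(x - δ, x + δ]`. -/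
noncomputable def localReg (f : ℝ → ℂ) (x δ : ℝ) (t : ℝ) : ℂ :=
  f t - (Ioc (x - δ) (x + δ)).indicator (fun _ => f x) t

lemma localReg_self (f : ℝ → ℂ) {x δ : ℝ} (hδ : 0 < δ) : localReg f x δ x = 0 := by
  have : x ∈ Ioc (x - δ) (x + δ) := ⟨by linarith, by linarith⟩
  simp [localReg, indicator_of_mem this]

lemma measurable_localReg {f : ℝ → ℂ} (hf : Measurable f) (x δ : ℝ) :
    Measurable (localReg f x δ) :=
  hf.sub (measurable_const.indicator measurableSet_Ioc)

lemma intervalIntegrable_abs_sub_rpow (x δ : ℝ) {r : ℝ} (hr : -1 < r) :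
    IntervalIntegrable (fun t : ℝ => |t - x| ^ r) volume (x - δ) (x + δ) := by
  have h0 : ∀ b : ℝ, IntervalIntegrable (fun s : ℝ => |s| ^ r) volume 0 b := by
    intro b
    refine intervalIntegrable_of_even (f := fun s : ℝ => |s| ^ r) (fun s => by simp)
      (fun b hb => ?_) (by simp) (by simp)
    refine (intervalIntegral.intervalIntegrable_rpow' hr (a := 0) (b := b)).congr ?_
    intro s hs
    rw [uIoc_of_le hb.le] at hs
    simp [abs_of_pos hs.1]
  have h1 := ((h0 (-δ)).symm.trans (h0 δ)).comp_sub_right x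
  rwa [neg_add_eq_sub, add_comm δ x] at h1

/-- The Hölder condition controls `g t / (t - x)` near `x`, and the weighted integrability of `f`
controls it at infinity. -/
lemma integrableOn_localReg_div {f : ℝ → ℂ} (hf : Measurable f)
    (hint : IntegrableOn (fun t => ‖f t‖ / (1 + t)) (Ioi 0))
    {x δ μ γ : ℝ} (hx : 0 < x) (hδ : 0 < δ) (hμ : 0 < μ) (hγ : 0 < γ)
    (hHolder : ∀ s ∈ Icc (x - δ) (x + δ), ∀ u ∈ Icc (x - δ) (x + δ),
      ‖f s - f u‖ ≤ μ * |s - u| ^ γ) :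
    IntegrableOn (fun t : ℝ => localReg f x δ t / ((t : ℂ) - x)) (Ioi 0) := by
  have hA : Integrable ((Ioc (x - δ) (x + δ)).indicator (fun t : ℝ => μ * |t - x| ^ (γ - 1))) := by
    rw [integrable_indicator_iff measurableSet_Ioc,
      ← intervalIntegrable_iff_integrableOn_Ioc_of_le (by linarith)]
    exact (intervalIntegrable_abs_sub_rpow x δ (by linarith)).const_mul μ
  refine Integrable.mono' (hA.integrableOn.add (hint.const_mul ((1 + x) / δ + 1)))
    ((measurable_localReg hf x δ).div (by fun_prop)).aestronglyMeasurable ?_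
  rw [ae_restrict_iff' measurableSet_Ioi]
  refine ae_of_all _ fun t ht => ?_
  have ht : 0 < t := ht
  have hnorm : ‖(t : ℂ) - x‖ = |t - x| := by
    rw [← Complex.ofReal_sub, Complex.norm_real, Real.norm_eq_abs]
  rw [norm_div, hnorm]
  simp only [Pi.add_apply]
  have hC : 0 ≤ (1 + x) / δ + 1 := by positivity
  by_cases htI : t ∈ Ioc (x - δ) (x + δ)
  · rw [indicator_of_mem htI]
    have h2 : 0 ≤ ((1 + x) / δ + 1) * (‖f t‖ / (1 + t)) := by positivity
    refine le_add_of_le_of_nonneg ?_ h2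
    rw [localReg, indicator_of_mem htI]
    rcases eq_or_ne t x with rfl | hne
    · simp only [sub_self, norm_zero, zero_div]; positivity
    · have hpos : 0 < |t - x| := abs_pos.2 (sub_ne_zero.2 hne)
      rw [Real.rpow_sub hpos, Real.rpow_one, ← mul_div_assoc]
      gcongr
      exact hHolder t (Ioc_subset_Icc_self htI) x ⟨by linarith, by linarith⟩
  · rw [indicator_of_notMem htI, localReg, indicator_of_notMem htI, zero_add, sub_zero]
    have hge : δ ≤ |t - x| := by
      by_contra! h
      rw [abs_lt] at h
      exact htI ⟨by linarith, by linarith⟩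
    have hpos : 0 < |t - x| := hδ.trans_le hge
    have hle : 1 + t ≤ ((1 + x) / δ + 1) * |t - x| := by
      have h1 : 1 + x ≤ (1 + x) / δ * |t - x| := by
        rw [div_mul_eq_mul_div, le_div_iff₀ hδ]
        gcongr
      have := le_abs_self (t - x)
      linarith
    rw [← mul_div_assoc, div_le_div_iff₀ hpos (by linarith)]
    calc ‖f t‖ * (1 + t) ≤ ‖f t‖ * (((1 + x) / δ + 1) * |t - x|) := by gcongr
      _ = _ := by ring

/-- Moving the pole off the real axis vertically only decreases the quotient; at `t = x` both sides
are zero. -/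
lemma norm_localReg_div_le (f : ℝ → ℂ) {x δ : ℝ} (hδ : 0 < δ) (η t : ℝ) :
    ‖localReg f x δ t / ((t : ℂ) - (x + η * I))‖ ≤ ‖localReg f x δ t / ((t : ℂ) - x)‖ := by
  rcases eq_or_ne t x with rfl | hne
  · simp [localReg_self f hδ]
  · rw [norm_div, norm_div]
    have hnorm : ‖(t : ℂ) - x‖ = |t - x| := by
      rw [← Complex.ofReal_sub, Complex.norm_real, Real.norm_eq_abs]
    have hpos : 0 < |t - x| := abs_pos.2 (sub_ne_zero.2 hne)
    rw [hnorm]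
    gcongr
    simpa using Complex.abs_re_le_norm ((t : ℂ) - (x + η * I))

/-! ### The Cauchy integral of a constant on a symmetric window -/

lemma ofReal_sub_mul_I_ne_zero {η : ℝ} (hη : η ≠ 0) (s : ℝ) : (s : ℂ) - η * I ≠ 0 := by
  intro h
  have := congrArg Complex.im h
  simp at this
  exact hη this

/-- The primitive is `log (s² + η²) / 2 + i arctan (s / η)`. -/
lemma integral_one_div_sub_mul_I {η : ℝ} (hη : η ≠ 0) (δ : ℝ) :
    ∫ s in (-δ)..δ, 1 / ((s : ℂ) - η * I) = (2 * Real.arctan (δ / η) : ℝ) * I := by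
  have hpos : ∀ s : ℝ, 0 < s ^ 2 + η ^ 2 := fun s => by positivity
  have hd : ∀ s : ℝ, HasDerivAt
      (fun s : ℝ => ((Real.log (s ^ 2 + η ^ 2) / 2 : ℝ) : ℂ) + (Real.arctan (s / η) : ℝ) * I)
      (1 / ((s : ℂ) - η * I)) s := by
    intro s
    have h1 : HasDerivAt (fun s : ℝ => Real.log (s ^ 2 + η ^ 2) / 2)
        ((2 * s) / (s ^ 2 + η ^ 2) / 2) s := by
      have : HasDerivAt (fun s : ℝ => s ^ 2 + η ^ 2) (2 * s) s := by
        simpa using (hasDerivAt_pow 2 s).add_const (η ^ 2)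
      exact (this.log (hpos s).ne').div_const 2
    have h2 : HasDerivAt (fun s : ℝ => Real.arctan (s / η))
        (1 / (1 + (s / η) ^ 2) * (1 / η)) s :=
      ((hasDerivAt_id s).div_const η).arctan
    convert! h1.ofReal_comp.add (h2.ofReal_comp.mul_const I) using 1
    have hne := ofReal_sub_mul_I_ne_zero hη s
    have e2 : 1 / (1 + (s / η) ^ 2) * (1 / η) = η / (s ^ 2 + η ^ 2) := by
      have := (hpos s).ne'
      field_simp
      ring
    have hp : ((s : ℂ) ^ 2 + (η : ℂ) ^ 2) ≠ 0 := by exact_mod_cast (hpos s).ne'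
    rw [e2]
    push_cast
    field_simp
    ring_nf
    rw [I_sq]
    ring
  rw [intervalIntegral.integral_eq_sub_of_hasDerivAt (fun s _ => hd s)]
  · rw [neg_sq, neg_div, Real.arctan_neg]
    push_cast
    ring
  · refine Continuous.intervalIntegrable ?_ _ _
    exact continuous_const.div (by fun_prop) (ofReal_sub_mul_I_ne_zero hη)

lemma tendsto_integral_one_div {δ : ℝ} (hδ : 0 < δ) {σ : ℝ} (hσ : σ = 1 ∨ σ = -1) :
    Tendsto (fun ε : ℝ => ∫ s in (-δ)..δ, 1 / ((s : ℂ) - (σ * ε : ℝ) * I))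
      (nhdsWithin 0 (Ioi 0)) (nhds ((σ * Real.pi : ℝ) * I)) := by
  have h1 : Tendsto (fun ε : ℝ => δ / ε) (nhdsWithin 0 (Ioi 0)) atTop := by
    simpa [div_eq_mul_inv] using tendsto_inv_nhdsGT_zero.const_mul_atTop hδ
  have h2 : Tendsto (fun ε : ℝ => Real.arctan (δ / ε)) (nhdsWithin 0 (Ioi 0))
      (nhds (Real.pi / 2)) :=
    (tendsto_nhds_of_tendsto_nhdsWithin Real.tendsto_arctan_atTop).comp h1
  have h3 : Tendsto (fun ε : ℝ => ((σ * (2 * Real.arctan (δ / ε)) : ℝ) : ℂ) * I)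
      (nhdsWithin 0 (Ioi 0)) (nhds ((σ * (2 * (Real.pi / 2)) : ℝ) * I)) :=
    ((Complex.continuous_ofReal.tendsto _).comp ((h2.const_mul 2).const_mul σ)).mul_const I
  rw [mul_div_cancel₀ Real.pi (two_ne_zero)] at h3
  refine h3.congr' ?_
  filter_upwards [self_mem_nhdsWithin] with ε hε
  have hε : 0 < ε := hε
  rw [integral_one_div_sub_mul_I]
  · rcases hσ with rfl | rfl
    · simp
    · rw [neg_one_mul, neg_one_mul, div_neg, Real.arctan_neg, mul_neg]
  · rcases hσ with rfl | rfl <;> simp [hε.ne']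

/-! ### Boundary values of the Cauchy transform -/

/-- Both boundary values at once: `σ = 1` is the limit from above, `σ = -1` the one from below. -/
lemma tendsto_cauchyT {f : ℝ → ℂ} (hf : Measurable f) {x δ : ℝ} (hδ : 0 < δ)
    (hsub : Icc (x - δ) (x + δ) ⊆ Ioi 0)
    (hg : IntegrableOn (fun t : ℝ => localReg f x δ t / ((t : ℂ) - x)) (Ioi 0))
    {σ : ℝ} (hσ : σ = 1 ∨ σ = -1) :
    Tendsto (fun ε : ℝ => cauchyT f ((x : ℂ) + (σ * ε : ℝ) * I)) (nhdsWithin 0 (Ioi 0))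
      (nhds ((2 * Real.pi * I)⁻¹ * ((∫ t in Ioi (0 : ℝ), localReg f x δ t / ((t : ℂ) - x)) +
        f x * ((σ * Real.pi : ℝ) * I)))) := by
  have hmeas : ∀ z : ℂ, AEStronglyMeasurable (fun t : ℝ => localReg f x δ t / ((t : ℂ) - z))
      (volume.restrict (Ioi 0)) := fun z =>
    ((measurable_localReg hf x δ).div (by fun_prop)).aestronglyMeasurable
  have hlim : Tendsto (fun ε : ℝ => ∫ t in Ioi (0 : ℝ),
      localReg f x δ t / ((t : ℂ) - (x + (σ * ε : ℝ) * I))) (nhdsWithin 0 (Ioi 0))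
      (nhds (∫ t in Ioi (0 : ℝ), localReg f x δ t / ((t : ℂ) - x))) := by
    refine tendsto_integral_filter_of_dominated_convergence _ (Eventually.of_forall fun ε => hmeas _)
      (Eventually.of_forall fun ε => ae_of_all _ fun t => norm_localReg_div_le f hδ _ t) hg.norm
      (ae_of_all _ fun t => ?_)
    rcases eq_or_ne t x with rfl | hne
    · simp [localReg_self f hδ]
    · have hne' : (t : ℂ) - x ≠ 0 := sub_ne_zero.2 (by exact_mod_cast hne)
      refine tendsto_const_nhds.div ?_ hne'
      have hc : Continuous (fun ε : ℝ => (t : ℂ) - (x + (σ * ε : ℝ) * I)) := by fun_prop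
      have := hc.tendsto 0
      simp only [mul_zero, Complex.ofReal_zero, zero_mul, add_zero] at this
      exact this.mono_left nhdsWithin_le_nhds
  refine ((hlim.add ((tendsto_integral_one_div hδ hσ).const_mul (f x))).const_mul _).congr' ?_
  filter_upwards [self_mem_nhdsWithin] with ε hε
  have hε : 0 < ε := hε
  have hη : σ * ε ≠ 0 := by rcases hσ with rfl | rfl <;> simp [hε.ne']
  generalize σ * ε = η at hη
  rw [cauchyT]
  congr 1
  have hI : Ioi (0 : ℝ) ∩ Ioc (x - δ) (x + δ) = Ioc (x - δ) (x + δ) :=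
    inter_eq_right.2 (Ioc_subset_Icc_self.trans hsub)
  have hcont : Continuous (fun t : ℝ => f x / ((t : ℂ) - (x + η * I))) := by
    refine continuous_const.div (by fun_prop) fun t => ?_
    have := ofReal_sub_mul_I_ne_zero hη (t - x)
    push_cast at this
    rwa [← sub_sub]
  have hcint : Integrable ((Ioc (x - δ) (x + δ)).indicator
      (fun t : ℝ => f x / ((t : ℂ) - (x + η * I)))) := by
    rw [integrable_indicator_iff measurableSet_Ioc]
    exact (hcont.integrableOn_Icc).mono_set Ioc_subset_Icc_self
  have hgint : IntegrableOn (fun t : ℝ => localReg f x δ t / ((t : ℂ) - (x + η * I))) (Ioi 0) :=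
    Integrable.mono hg (hmeas _) (ae_of_all _ fun t => norm_localReg_div_le f hδ _ t)
  have hsplit : ∀ t : ℝ, f t / ((t : ℂ) - (x + η * I)) =
      localReg f x δ t / ((t : ℂ) - (x + η * I)) + (Ioc (x - δ) (x + δ)).indicator
      (fun t : ℝ => f x / ((t : ℂ) - (x + η * I))) t := by
    intro t
    by_cases ht : t ∈ Ioc (x - δ) (x + δ)
    · simp only [localReg, indicator_of_mem ht]
      ring
    · simp only [localReg, indicator_of_notMem ht]
      ring
  simp_rw [hsplit]
  rw [integral_add hgint hcint.integrableOn, setIntegral_indicator measurableSet_Ioc, hI,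
    ← intervalIntegral.integral_of_le (by linarith)]
  congr 1
  have := intervalIntegral.integral_comp_sub_right (a := x - δ) (b := x + δ)
    (fun s : ℝ => f x * (1 / ((s : ℂ) - η * I))) x
  rw [sub_sub_cancel_left, add_sub_cancel_left] at this
  rw [← intervalIntegral.integral_const_mul, ← this]
  refine intervalIntegral.integral_congr fun t _ => ?_
  push_cast
  rw [mul_one_div, sub_sub]

/-! ### The principal value -/

/-- The symmetric truncations of `∫ dt / (t - x)` over the window cancel by oddness, so that only
the absolutely convergent integral of `g t / (t - x)` survives. -/
lemma tendsto_hilbT {f : ℝ → ℂ} {x δ : ℝ} (hδ : 0 < δ)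
    (hsub : Icc (x - δ) (x + δ) ⊆ Ioi 0)
    (hg : IntegrableOn (fun t : ℝ => localReg f x δ t / ((t : ℂ) - x)) (Ioi 0)) :
    Tendsto (hilbT f x) (nhdsWithin 0 (Ioi 0))
      (nhds ((Real.pi : ℂ)⁻¹ * ∫ t in Ioi (0 : ℝ), localReg f x δ t / ((t : ℂ) - x))) := by
  have hxδ : 0 < x - δ := hsub ⟨le_rfl, by linarith⟩
  have hSm : ∀ ε : ℝ, MeasurableSet (Ioo 0 (x - ε) ∪ Ioi (x + ε)) := fun ε =>
    measurableSet_Ioo.union measurableSet_Ioi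
  have hlim : Tendsto (fun ε : ℝ => ∫ t in Ioi (0 : ℝ), (Ioo 0 (x - ε) ∪ Ioi (x + ε)).indicator
      (fun t : ℝ => localReg f x δ t / ((t : ℂ) - x)) t) (nhdsWithin 0 (Ioi 0))
      (nhds (∫ t in Ioi (0 : ℝ), localReg f x δ t / ((t : ℂ) - x))) := by
    refine tendsto_integral_filter_of_dominated_convergence _
      (Eventually.of_forall fun ε => hg.aestronglyMeasurable.indicator (hSm ε))
      (Eventually.of_forall fun ε => ae_of_all _ fun t => norm_indicator_le_norm_self _ t) hg.norm
      ?_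
    rw [ae_restrict_iff' measurableSet_Ioi]
    refine ae_of_all _ fun t ht => ?_
    have ht : 0 < t := ht
    rcases eq_or_ne t x with rfl | hne
    · simp [indicator, localReg_self f hδ]
    · refine tendsto_const_nhds.congr' ?_
      have hpos : 0 < |t - x| := abs_pos.2 (sub_ne_zero.2 hne)
      filter_upwards [Ioo_mem_nhdsGT hpos] with ε hε
      rw [indicator_of_mem]
      rcases lt_or_gt_of_ne hne with h | h
      · rw [abs_of_neg (by linarith)] at hε
        exact Or.inl ⟨ht, by linarith [hε.2]⟩
      · rw [abs_of_pos (by linarith)] at hε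
        exact Or.inr (by simp only [mem_Ioi]; linarith [hε.2])
  refine (hlim.const_mul _).congr' ?_
  filter_upwards [Ioo_mem_nhdsGT hδ] with ε hε
  obtain ⟨hε0, hεδ⟩ := hε
  rw [hilbT]
  congr 1
  have hdisj : Disjoint (Ioo 0 (x - ε)) (Ioi (x + ε)) := by
    rw [Set.disjoint_left]
    intro t h1 h2
    have h2 : x + ε < t := h2
    linarith [h1.2]
  have hS1 : Ioo 0 (x - ε) ⊆ Ioi 0 := fun t h => h.1
  have hS2 : Ioi (x + ε) ⊆ Ioi 0 := fun t h => by
    have h : x + ε < t := h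
    simp only [mem_Ioi]
    linarith
  rw [setIntegral_indicator (hSm ε), inter_eq_right.2 (union_subset hS1 hS2),
    setIntegral_union hdisj measurableSet_Ioi (hg.mono_set hS1) (hg.mono_set hS2)]
  have hsplit : ∀ t : ℝ, f t / ((t : ℂ) - x) =
      localReg f x δ t / ((t : ℂ) - x) + (Ioc (x - δ) (x + δ)).indicator
      (fun t : ℝ => f x / ((t : ℂ) - x)) t := by
    intro t
    by_cases ht : t ∈ Ioc (x - δ) (x + δ)
    · simp only [localReg, indicator_of_mem ht]
      ring
    · simp only [localReg, indicator_of_notMem ht]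
      ring
  have hcont : ∀ a b : ℝ, (∀ t ∈ Icc a b, t ≠ x) →
      IntegrableOn (fun t : ℝ => f x / ((t : ℂ) - x)) (Icc a b) := by
    intro a b hab
    refine ContinuousOn.integrableOn_Icc (continuousOn_const.div (by fun_prop) fun t ht => ?_)
    exact sub_ne_zero.2 (by exact_mod_cast hab t ht)
  have hi1 : Ioo 0 (x - ε) ∩ Ioc (x - δ) (x + δ) = Ioo (x - δ) (x - ε) := by
    ext t
    simp only [mem_inter_iff, mem_Ioo, mem_Ioc]
    constructor
    · rintro ⟨⟨_, h1⟩, h2, _⟩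
      exact ⟨h2, h1⟩
    · rintro ⟨h1, h2⟩
      exact ⟨⟨by linarith, h2⟩, h1, by linarith⟩
  have hi2 : Ioi (x + ε) ∩ Ioc (x - δ) (x + δ) = Ioc (x + ε) (x + δ) := by
    ext t
    simp only [mem_inter_iff, mem_Ioi, mem_Ioc]
    constructor
    · rintro ⟨h1, _, h2⟩
      exact ⟨h1, h2⟩
    · rintro ⟨h1, h2⟩
      exact ⟨h1, by linarith, h2⟩
  have hc1 : IntegrableOn ((Ioc (x - δ) (x + δ)).indicator (fun t : ℝ => f x / ((t : ℂ) - x)))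
      (Ioo 0 (x - ε)) := by
    rw [IntegrableOn, integrable_indicator_iff measurableSet_Ioc, IntegrableOn,
      Measure.restrict_restrict measurableSet_Ioc, inter_comm, hi1]
    exact (hcont (x - δ) (x - ε) fun t ht => by linarith [ht.2] |> ne_of_lt).mono_set
      Ioo_subset_Icc_self
  have hc2 : IntegrableOn ((Ioc (x - δ) (x + δ)).indicator (fun t : ℝ => f x / ((t : ℂ) - x)))
      (Ioi (x + ε)) := by
    rw [IntegrableOn, integrable_indicator_iff measurableSet_Ioc, IntegrableOn,
      Measure.restrict_restrict measurableSet_Ioc, inter_comm, hi2]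
    exact (hcont (x + ε) (x + δ) fun t ht => (by linarith [ht.1] : x < t).ne').mono_set
      Ioc_subset_Icc_self
  simp_rw [hsplit]
  rw [integral_add (hg.mono_set hS1) hc1, integral_add (hg.mono_set hS2) hc2,
    setIntegral_indicator measurableSet_Ioc, setIntegral_indicator measurableSet_Ioc, hi1, hi2,
    ← integral_Ioc_eq_integral_Ioo (x := x - δ), ← intervalIntegral.integral_of_le (by linarith),
    ← intervalIntegral.integral_of_le (by linarith)]
  -- The reflection `t ↦ 2x - t` exchanges the two halves of the truncated window.
  have hodd : ∫ t in (x - δ)..(x - ε), f x / ((t : ℂ) - x) =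
      -∫ t in (x + ε)..(x + δ), f x / ((t : ℂ) - x) := by
    have := intervalIntegral.integral_comp_sub_left (a := x + ε) (b := x + δ)
      (fun t : ℝ => f x / ((t : ℂ) - x)) (2 * x)
    rw [show 2 * x - (x + δ) = x - δ by ring, show 2 * x - (x + ε) = x - ε by ring] at this
    rw [← this, ← intervalIntegral.integral_neg]
    refine intervalIntegral.integral_congr fun t _ => ?_
    rw [← div_neg]
    push_cast
    congr 1
    ring
  rw [hodd]
  ring

/-! ### The jump relations -/

/-- Plemelj's lemma: existence of boundary values `C⁺f(x)`, `C⁻f(x)`, the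
principal value `H f(x)`, together with `C⁺f - C⁻f = f` and
`C⁺f + C⁻f = -i H f`. -/
theorem stmt0 (f : ℝ → ℂ) (hf : Measurable f)
    (hint : IntegrableOn (fun t => ‖f t‖ / (1 + t)) (Ioi 0))
    (x : ℝ) (hx : 0 < x)
    (δ μ γ : ℝ) (hδ : 0 < δ) (hsub : Icc (x - δ) (x + δ) ⊆ Ioi 0)
    (hμ : 0 < μ) (hγ : γ ∈ Ioc (0:ℝ) 1)
    (hHolder : ∀ s ∈ Icc (x - δ) (x + δ), ∀ u ∈ Icc (x - δ) (x + δ),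
      ‖f s - f u‖ ≤ μ * |s - u| ^ γ) :
    ∃ cp cm hv : ℂ,
      Tendsto (fun ε : ℝ => cauchyT f ((x : ℂ) + (ε : ℝ) * Complex.I))
        (nhdsWithin 0 (Ioi 0)) (nhds cp) ∧
      Tendsto (fun ε : ℝ => cauchyT f ((x : ℂ) - (ε : ℝ) * Complex.I))
        (nhdsWithin 0 (Ioi 0)) (nhds cm) ∧
      Tendsto (hilbT f x) (nhdsWithin 0 (Ioi 0)) (nhds hv) ∧
      cp - cm = f x ∧ cp + cm = -Complex.I * hv := by
  have hg := integrableOn_localReg_div hf hint hx hδ hμ hγ.1 hHolder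
  have hp := tendsto_cauchyT hf hδ hsub hg (σ := 1) (Or.inl rfl)
  have hm := tendsto_cauchyT hf hδ hsub hg (σ := -1) (Or.inr rfl)
  have hpi : (Real.pi : ℂ) ≠ 0 := by exact_mod_cast Real.pi_ne_zero
  refine ⟨_, _, _, hp.congr fun ε => ?_, hm.congr fun ε => ?_, tendsto_hilbT hδ hsub hg, ?_, ?_⟩
  · rw [one_mul]
  · rw [neg_one_mul, Complex.ofReal_neg, neg_mul, ← sub_eq_add_neg]
  · generalize (∫ t in Ioi (0 : ℝ), localReg f x δ t / ((t : ℂ) - x)) = K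
    push_cast
    field_simp [I_ne_zero]
    ring
  · generalize (∫ t in Ioi (0 : ℝ), localReg f x δ t / ((t : ℂ) - x)) = K
    push_cast
    field_simp [I_ne_zero]
    ring_nf
    simp [I_sq]
end

section
/- Let f : (0,∞) → ℂ be measurable with ∫_0^∞ |f(t)|/(1+t) dt < ∞ and ∫_0^∞ |f(t^{1/2})| t^{−1/2}/(1+t) dt < ∞. Then for every z with Im z > 0, C f(z) = (1/2)[ C[t ↦ f(√t)](z²) + P_{1/2}[t ↦ f(√t)](z²) ], and for every z with Im z < 0, C f(z) = (1/2)[ C[t ↦ f(√t)](z²) − P_{1/2}[t ↦ f(√t)](z²) ] (in both cases z² ∉ [0,∞), so all transforms are defined). -/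
/-!
Substituting `t = u²` gives `∫ f(√t)/(t - z²) dt = ∫ 2u f(u)/(u² - z²) du` and
`∫ f(√t) t^(-1/2)/(t - z²) dt = ∫ 2 f(u)/(u² - z²) du`. Since
`2u/(u² - z²) = 1/(u - z) + 1/(u + z)` and `2z/(u² - z²) = 1/(u - z) - 1/(u + z)`, the first
integral plus `z` times the second is `2 ∫ f(u)/(u - z) du`; the splitting is legitimate
because `f(u)/(u - w)` is integrable for every non-real `w` (`integrableOn_cauchy_kernel`).
Finally the prefactor `e^{iπ/2} (-z²)^{1/2}` equals `z` in the upper half plane and `-z` in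
the lower one: `-z² = (∓iz)²`, where the sign is chosen so that `∓iz` has positive real part.
-/

open MeasureTheory Complex Set Filter

/-- The transform `P_r f(z) = e^{iπr} (-z)^r C[f(t) t^{-r}](z)`
(principal power). -/
noncomputable def PrT (r : ℝ) (f : ℝ → ℂ) (z : ℂ) : ℂ :=
  Complex.exp (Complex.I * Real.pi * r) * (-z) ^ (r : ℂ) *
    cauchyT (fun t => f t * ((t ^ (-r) : ℝ) : ℂ)) z

/-- The weight `1/(1+u)` dominates the Cauchy kernel: `1 + u ≤ (1 + |1+w|/|Im w|) |u - w|`. -/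
lemma integrableOn_cauchy_kernel (f : ℝ → ℂ) (hf : Measurable f)
    (h1 : IntegrableOn (fun t => ‖f t‖ / (1 + t)) (Ioi 0)) {w : ℂ} (hw : w.im ≠ 0) :
    IntegrableOn (fun u : ℝ => f u / ((u : ℂ) - w)) (Ioi 0) := by
  refine Integrable.mono' (h1.const_mul (1 + ‖1 + w‖ / |w.im|)) ?_ ?_
  · exact (hf.div (by fun_prop)).aestronglyMeasurable
  · filter_upwards [ae_restrict_mem measurableSet_Ioi] with u hu
    have hu0 : (0:ℝ) < u := hu
    have him : |w.im| ≤ ‖(u : ℂ) - w‖ := by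
      simpa using Complex.abs_im_le_norm ((u : ℂ) - w)
    have hpos : 0 < |w.im| := abs_pos.mpr hw
    have hk : 1 + u ≤ (1 + ‖1 + w‖ / |w.im|) * ‖(u : ℂ) - w‖ := by
      have e1 : ‖(1 + u : ℂ)‖ = 1 + u := by
        rw [← Complex.ofReal_one, ← Complex.ofReal_add, Complex.norm_real, Real.norm_eq_abs,
          abs_of_pos (by linarith)]
      have e2 : ‖(1 + u : ℂ)‖ ≤ ‖1 + w‖ + ‖(u : ℂ) - w‖ := by
        have := norm_add_le (1 + w) ((u : ℂ) - w)
        rwa [show 1 + w + ((u : ℂ) - w) = 1 + u by ring] at this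
      have e3 : ‖1 + w‖ ≤ ‖1 + w‖ / |w.im| * ‖(u : ℂ) - w‖ := by
        rw [div_mul_eq_mul_div, le_div_iff₀ hpos]
        gcongr
      linarith
    rw [norm_div, mul_div_assoc', div_le_div_iff₀ (hpos.trans_le him) (by linarith)]
    calc ‖f u‖ * (1 + u)
        ≤ ‖f u‖ * ((1 + ‖1 + w‖ / |w.im|) * ‖(u : ℂ) - w‖) := by gcongr
      _ = _ := by ring

/-- The substitution `t = u²` on `(0, ∞)`. -/
lemma integral_Ioi_comp_sq (g : ℝ → ℂ) :
    ∫ t in Ioi (0:ℝ), g t = ∫ u in Ioi (0:ℝ), (2 * (u : ℂ)) * g (u ^ 2) := by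
  rw [← integral_comp_rpow_Ioi g (two_ne_zero : (2:ℝ) ≠ 0)]
  refine setIntegral_congr_fun measurableSet_Ioi fun u hu => ?_
  norm_num [Complex.real_smul]

/-- The formula with the prefactor of `PrT` replaced by its value `z`. -/
lemma cauchyT_eq_half_sqrt (f : ℝ → ℂ) (hf : Measurable f)
    (h1 : IntegrableOn (fun t => ‖f t‖ / (1 + t)) (Ioi 0)) {z : ℂ} (hz : z.im ≠ 0) :
    cauchyT f z = (1/2 : ℂ) *
      (cauchyT (fun t => f (Real.sqrt t)) (z ^ 2) +
        z * cauchyT (fun t => f (Real.sqrt t) * ((t ^ (-(1/2 : ℝ)) : ℝ) : ℂ)) (z ^ 2)) := by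
  have i1 := integrableOn_cauchy_kernel f hf h1 hz
  have i2 := integrableOn_cauchy_kernel f hf h1 (w := -z) (by simpa using hz)
  have hne : ∀ u : ℝ, (u : ℂ) - z ≠ 0 ∧ (u : ℂ) - -z ≠ 0 := fun u =>
    ⟨fun h => hz (by simpa using congrArg Complex.im h),
      fun h => hz (by simpa using congrArg Complex.im h)⟩
  have hA : ∫ t in Ioi (0:ℝ), f (Real.sqrt t) / ((t : ℂ) - z ^ 2) =
      (∫ u in Ioi (0:ℝ), f u / ((u : ℂ) - z)) + ∫ u in Ioi (0:ℝ), f u / ((u : ℂ) - -z) := by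
    rw [integral_Ioi_comp_sq, ← integral_add i1 i2]
    refine setIntegral_congr_fun measurableSet_Ioi fun u hu => ?_
    obtain ⟨a, b⟩ := hne u
    have hs : (u : ℂ) ^ 2 - z ^ 2 = (u - z) * (u - -z) := by ring
    simp only [Real.sqrt_sq (le_of_lt hu), Complex.ofReal_pow, hs]
    field_simp
    ring
  have hB : z * ∫ t in Ioi (0:ℝ),
        f (Real.sqrt t) * ((t ^ (-(1/2 : ℝ)) : ℝ) : ℂ) / ((t : ℂ) - z ^ 2) =
      (∫ u in Ioi (0:ℝ), f u / ((u : ℂ) - z)) - ∫ u in Ioi (0:ℝ), f u / ((u : ℂ) - -z) := by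
    rw [integral_Ioi_comp_sq, ← integral_sub i1 i2, ← integral_const_mul]
    refine setIntegral_congr_fun measurableSet_Ioi fun u hu => ?_
    obtain ⟨a, b⟩ := hne u
    have hu0 : (u : ℂ) ≠ 0 := Complex.ofReal_ne_zero.mpr (ne_of_gt hu)
    have hp : (u ^ 2) ^ (-(1/2 : ℝ)) = u⁻¹ := by
      rw [Real.rpow_neg (sq_nonneg u), ← Real.sqrt_eq_rpow, Real.sqrt_sq (le_of_lt hu)]
    have hs : (u : ℂ) ^ 2 - z ^ 2 = (u - z) * (u - -z) := by ring
    simp only [Real.sqrt_sq (le_of_lt hu), Complex.ofReal_pow, hs, hp, Complex.ofReal_inv]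
    field_simp
    ring
  simp only [cauchyT]
  rw [mul_left_comm z, hB, hA]
  ring

/-- A square root with positive real part is the principal one. -/
lemma sq_cpow_half {a : ℂ} (ha : 0 < a.re) : (a ^ 2) ^ (((1/2 : ℝ)) : ℂ) = a := by
  have harg := Complex.abs_arg_lt_pi_div_two_iff.mpr (Or.inl ha)
  rw [abs_lt] at harg
  have := Complex.pow_cpow_nat_inv (x := a) (n := 2) two_ne_zero
    (by push_cast; linarith [harg.1]) (by push_cast; linarith [harg.2])
  simpa using this

lemma exp_I_pi_half : Complex.exp (Complex.I * Real.pi * ((1/2 : ℝ) : ℂ)) = Complex.I := by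
  rw [show Complex.I * Real.pi * ((1/2 : ℝ) : ℂ) = Real.pi / 2 * Complex.I by push_cast; ring,
    Complex.exp_pi_div_two_mul_I]

/-- Square-root map formula:
`C f(z) = (1/2)[C[f(√·)](z²) ± P_{1/2}[f(√·)](z²)]` for `±Im z > 0`. -/
theorem stmt13 (f : ℝ → ℂ) (hf : Measurable f)
    (h1 : IntegrableOn (fun t => ‖f t‖ / (1 + t)) (Ioi 0))
    (h2 : IntegrableOn
      (fun t => ‖f (Real.sqrt t)‖ * t ^ (-(1:ℝ)/2) / (1 + t)) (Ioi 0)) :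
    ∀ z : ℂ,
      (0 < z.im →
        cauchyT f z = (1/2 : ℂ) *
          (cauchyT (fun t => f (Real.sqrt t)) (z ^ 2) +
            PrT (1/2) (fun t => f (Real.sqrt t)) (z ^ 2))) ∧
      (z.im < 0 →
        cauchyT f z = (1/2 : ℂ) *
          (cauchyT (fun t => f (Real.sqrt t)) (z ^ 2) -
            PrT (1/2) (fun t => f (Real.sqrt t)) (z ^ 2))) := by
  intro z
  constructor
  · intro hz
    have hr : (-(z ^ 2)) ^ ((1/2 : ℝ) : ℂ) = -Complex.I * z := by
      rw [show -(z ^ 2) = (-Complex.I * z) ^ 2 by rw [mul_pow, neg_sq, Complex.I_sq]; ring]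
      exact sq_cpow_half (by simpa using hz)
    have hc : Complex.I * (-Complex.I * z) = z := by
      linear_combination (-z) * Complex.I_mul_I
    rw [cauchyT_eq_half_sqrt f hf h1 hz.ne', PrT, exp_I_pi_half, hr, hc]
  · intro hz
    have hr : (-(z ^ 2)) ^ ((1/2 : ℝ) : ℂ) = Complex.I * z := by
      rw [show -(z ^ 2) = (Complex.I * z) ^ 2 by rw [mul_pow, Complex.I_sq]; ring]
      exact sq_cpow_half (by simpa using hz)
    have hc : Complex.I * (Complex.I * z) = -z := by
      linear_combination z * Complex.I_mul_I
    rw [cauchyT_eq_half_sqrt f hf h1 hz.ne, PrT, exp_I_pi_half, hr, hc, neg_mul, sub_neg_eq_add]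
end
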